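/- arXiv:2211.07736 — 2 statements merged into one kernel-verified Lean document; each statement's English description precedes it below -/
import Mathlib

section
/- Let X be a complex Banach space, T a bounded linear operator on X, and β an ordinal. Then T is g_σ^{β+1}-invertible if and only if there exist T-invariant subspaces M and N of X with N closed, X = M ⊕ N as an algebraic direct sum, the restriction T|_M : M → M bijective, and acc^β σ(T_N) ⊆ {0}. -/
open Ordinal Set

/-- The `α`-th Cantor–Bendixson derivative of a set `A ⊆ ℂ`, defined by transfinite
recursion: `cbd A 0 = A`, `cbd A (β+1) = derivedSet (cbd A β)` (the set of accumulation
points of `cbd A β`), and `cbd A α = ⋂_{β < α} cbd A β` for limit ordinals `α`. -/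
noncomputable def cbd (A : Set ℂ) (α : Ordinal) : Set ℂ :=
  Ordinal.limitRecOn α A (fun _ ih => derivedSet ih)
    (fun α _ ih => ⋂ (β : Set.Iio α), ih β.1 β.2)

variable {X : Type*} [NormedAddCommGroup X] [NormedSpace ℂ X] [CompleteSpace X]

/-- The restriction `T_M` of a bounded operator `T` to a `T`-invariant subspace `M`. -/
noncomputable def restr (T : X →L[ℂ] X) (M : Submodule ℂ X)
    (hM : ∀ x ∈ M, T x ∈ M) : M →L[ℂ] M :=
  { toLinearMap := T.toLinearMap.restrict hM
    cont := (T.continuous.comp continuous_subtype_val).subtype_mk _ }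


/-- `T` is `g_σ^{β+1}`-invertible: there is `(M, N) ∈ Red T` (a pair of closed
`T`-invariant subspaces with `X = M ⊕ N`) such that `T_M` is invertible and
`acc^β σ(T_N) ⊆ {0}`. -/
def GInv (β : Ordinal) (T : X →L[ℂ] X) : Prop :=
  ∃ (M N : Submodule ℂ X) (hM : ∀ x ∈ M, T x ∈ M) (hN : ∀ x ∈ N, T x ∈ N),
    IsClosed (M : Set X) ∧ IsClosed (N : Set X) ∧ IsCompl M N ∧
    IsUnit (restr T M hM) ∧ cbd (spectrum ℂ (restr T N hN)) β ⊆ {0}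

section RieszAlg
open MeasureTheory Metric Set

theorem clm_circleIntegral {E F : Type*} [NormedAddCommGroup E] [NormedSpace ℂ E]
    [CompleteSpace E] [NormedAddCommGroup F] [NormedSpace ℂ F] [CompleteSpace F]
    (L : E →L[ℂ] F) (f : ℂ → E) (c : ℂ) (r : ℝ) (hf : CircleIntegrable f c r) :
    L (∮ z in C(c, r), f z) = ∮ z in C(c, r), L (f z) := by
  simp only [circleIntegral]
  rw [← L.intervalIntegral_comp_comm hf.out]
  simp

theorem circleIntegral_swap {E : Type*} [NormedAddCommGroup E] [NormedSpace ℂ E]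
    [CompleteSpace E] (f : ℂ → ℂ → E) {r s : ℝ} (hr : 0 ≤ r) (hs : 0 ≤ s)
    (hf : ContinuousOn (Function.uncurry f) (sphere 0 r ×ˢ sphere 0 s)) :
    (∮ z in C(0, r), ∮ w in C(0, s), f z w) = ∮ w in C(0, s), ∮ z in C(0, r), f z w := by
  simp only [circleIntegral]
  have h0 : (0:ℝ) ≤ 2 * Real.pi := by positivity
  have hc : Continuous (Function.uncurry fun θ φ : ℝ =>
      deriv (circleMap 0 r) θ • deriv (circleMap 0 s) φ • f (circleMap 0 r θ) (circleMap 0 s φ)) := by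
    have : Continuous fun p : ℝ × ℝ => f (circleMap 0 r p.1) (circleMap 0 s p.2) :=
      hf.comp_continuous (f := fun p : ℝ × ℝ => (circleMap 0 r p.1, circleMap 0 s p.2))
        (by fun_prop) (fun p => ⟨circleMap_mem_sphere _ hr _, circleMap_mem_sphere _ hs _⟩)
    simp only [deriv_circleMap, Function.uncurry_def]
    exact Continuous.smul (by fun_prop) (Continuous.smul (by fun_prop) this)
  calc _ = ∫ θ in (0:ℝ)..2 * Real.pi, ∫ φ in (0:ℝ)..2 * Real.pi,
        deriv (circleMap 0 r) θ • deriv (circleMap 0 s) φ • f (circleMap 0 r θ) (circleMap 0 s φ) := by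
        simp only [intervalIntegral.integral_smul]
    _ = ∫ φ in (0:ℝ)..2 * Real.pi, ∫ θ in (0:ℝ)..2 * Real.pi,
        deriv (circleMap 0 r) θ • deriv (circleMap 0 s) φ • f (circleMap 0 r θ) (circleMap 0 s φ) := by
        simp only [intervalIntegral.integral_of_le h0]
        apply MeasureTheory.integral_integral_swap
        rw [Measure.prod_restrict]
        exact (hc.continuousOn.integrableOn_compact (isCompact_Icc.prod isCompact_Icc)).mono_set
          (Set.prod_mono Ioc_subset_Icc_self Ioc_subset_Icc_self)
    _ = _ := by
        congr 1; ext φ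
        rw [← intervalIntegral.integral_smul]
        congr 1; ext θ
        rw [smul_comm]

variable {A : Type*} [NormedRing A] [NormedAlgebra ℂ A] [CompleteSpace A]

theorem resolvent_contOn (a : A) : ContinuousOn (resolvent a : ℂ → A) (resolventSet ℂ a) :=
  fun _ hz => (spectrum.hasDerivAt_resolvent_const_left hz).continuousAt.continuousWithinAt

theorem resolvent_mul_cancel (a : A) {z : ℂ} (hz : z ∈ resolventSet ℂ a) :
    (algebraMap ℂ A z - a) * resolvent a z = 1 := Ring.mul_inverse_cancel _ hz

theorem cancel_mul_resolvent (a : A) {z : ℂ} (hz : z ∈ resolventSet ℂ a) :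
    resolvent a z * (algebraMap ℂ A z - a) = 1 := Ring.inverse_mul_cancel _ hz

theorem resolvent_mul_resolvent (a : A) {z w : ℂ} (hz : z ∈ resolventSet ℂ a)
    (hw : w ∈ resolventSet ℂ a) (hne : w - z ≠ 0) :
    resolvent a z * resolvent a w = (w - z)⁻¹ • (resolvent a z - resolvent a w) := by
  rw [eq_inv_smul_iff₀ hne]
  calc (w - z) • (resolvent a z * resolvent a w)
      = resolvent a z * ((algebraMap ℂ A w - a) - (algebraMap ℂ A z - a)) * resolvent a w := by
        rw [sub_sub_sub_cancel_right, ← map_sub, ← Algebra.commutes, ← Algebra.smul_def,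
          smul_mul_assoc]
    _ = resolvent a z * ((algebraMap ℂ A w - a) * resolvent a w)
        - (resolvent a z * (algebraMap ℂ A z - a)) * resolvent a w := by noncomm_ring
    _ = _ := by rw [resolvent_mul_cancel a hw, cancel_mul_resolvent a hz]; simp

theorem exists_annulus (a : A) {r : ℝ} (hr : sphere 0 r ⊆ resolventSet ℂ a) :
    ∃ s, r < s ∧ closedBall 0 s \ ball 0 r ⊆ resolventSet ℂ a := by
  have hK : IsClosed (norm '' spectrum ℂ a) :=
    ((spectrum.isCompact a).image continuous_norm).isClosed
  have hrK : r ∈ (norm '' spectrum ℂ a)ᶜ := by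
    rintro ⟨z, hz, rfl⟩
    exact hz (hr (by simp))
  obtain ⟨ε, hε, hb⟩ := Metric.isOpen_iff.1 hK.isOpen_compl r hrK
  refine ⟨r + ε / 2, by linarith, fun z hz => ?_⟩
  by_contra hzs
  refine hb (a := ‖z‖) ?_ ⟨z, hzs, rfl⟩
  simp only [mem_sdiff, mem_closedBall, mem_ball, dist_zero_right, not_lt] at hz
  rw [Metric.mem_ball, Real.dist_eq, abs_lt]
  constructor <;> linarith

/-- The (unnormalised) Riesz integral is idempotent up to `2πi`. -/
theorem riesz_mul_self (a : A) {r : ℝ} (hr0 : 0 < r) (hr : sphere 0 r ⊆ resolventSet ℂ a) :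
    (∮ z in C(0, r), resolvent a z) * (∮ z in C(0, r), resolvent a z)
      = (2 * Real.pi * Complex.I : ℂ) • ∮ z in C(0, r), resolvent a z := by
  obtain ⟨s, hs, hann⟩ := exists_annulus a hr
  have hs0 : 0 < s := hr0.trans hs
  have hss : sphere (0:ℂ) s ⊆ resolventSet ℂ a := fun z hz => hann (by
    simp only [mem_sphere, mem_sdiff, mem_closedBall, mem_ball, dist_zero_right, not_lt] at hz ⊢
    constructor <;> linarith)
  have hcr : CircleIntegrable (resolvent a : ℂ → A) 0 r :=
    ((resolvent_contOn a).mono hr).circleIntegrable hr0.le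
  have hcs : CircleIntegrable (resolvent a : ℂ → A) 0 s :=
    ((resolvent_contOn a).mono hss).circleIntegrable hs0.le
  have hne : ∀ z ∈ sphere (0:ℂ) r, ∀ w ∈ sphere (0:ℂ) s, w - z ≠ 0 := by
    intro z hz w hw h
    simp only [mem_sphere, dist_zero_right] at hz hw
    rw [sub_eq_zero.1 h] at hw
    linarith
  have heq : (∮ z in C(0, s), resolvent a z) = ∮ z in C(0, r), resolvent a z := by
    refine Complex.circleIntegral_eq_of_differentiable_on_annulus_off_countable hr0 hs.le
      countable_empty ((resolvent_contOn a).mono hann) ?_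
    intro z hz
    refine (spectrum.hasDerivAt_resolvent_const_left (hann ⟨ball_subset_closedBall hz.1.1,
      fun h => hz.1.2 (ball_subset_closedBall h)⟩)).differentiableAt
  have hdiv : ContinuousOn (Function.uncurry fun z w : ℂ => (w - z)⁻¹ • resolvent a w)
      (sphere 0 r ×ˢ sphere 0 s) := by
    refine ContinuousOn.smul (ContinuousOn.inv₀ (by fun_prop) fun p hp => hne _ hp.1 _ hp.2) ?_
    exact ((resolvent_contOn a).mono hss).comp continuousOn_snd fun p hp => hp.2
  have hinv : ∀ z ∈ sphere (0:ℂ) r, ContinuousOn (fun w : ℂ => (w - z)⁻¹) (sphere 0 s) :=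
    fun z hz => ContinuousOn.inv₀ (by fun_prop) fun w hw => hne _ hz _ hw
  have hin : ∀ z ∈ sphere (0:ℂ) r, (∮ w in C(0, s), resolvent a z * resolvent a w)
      = (2 * Real.pi * Complex.I : ℂ) • resolvent a z
        - ∮ w in C(0, s), (w - z)⁻¹ • resolvent a w := by
    intro z hz
    have : (∮ w in C(0, s), (w - z)⁻¹) = 2 * Real.pi * Complex.I :=
      circleIntegral.integral_sub_inv_of_mem_ball (by
        simp only [mem_sphere, mem_ball, dist_zero_right] at hz ⊢; linarith)
    rw [← this, ← circleIntegral.integral_smul_const, ← circleIntegral.integral_sub]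
    · refine circleIntegral.integral_congr hs0.le fun w hw => ?_
      simp only [resolvent_mul_resolvent a (hr hz) (hss hw) (hne _ hz _ hw), smul_sub]
    · exact ((hinv z hz).smul continuousOn_const).circleIntegrable hs0.le
    · exact ((hinv z hz).smul ((resolvent_contOn a).mono hss)).circleIntegrable hs0.le
  have hint : CircleIntegrable (fun z => ∮ w in C(0, s), (w - z)⁻¹ • resolvent a w) 0 r := by
    have h1 : CircleIntegrable (fun z => (2 * Real.pi * Complex.I : ℂ) • resolvent a z
        - resolvent a z * ∮ w in C(0, s), resolvent a w) 0 r := by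
      apply ContinuousOn.circleIntegrable hr0.le
      have := (resolvent_contOn a).mono hr
      fun_prop
    refine (circleIntegrable_congr ?_).1 h1
    rw [abs_of_pos hr0]
    intro z hz
    have := clm_circleIntegral (ContinuousLinearMap.mul ℂ A (resolvent a z)) _ _ _ hcs
    simp only [ContinuousLinearMap.mul_apply'] at this
    simp only [this, hin z hz, sub_sub_cancel]
  have hzero : (∮ z in C(0, r), ∮ w in C(0, s), (w - z)⁻¹ • resolvent a w) = 0 := by
    rw [circleIntegral_swap _ hr0.le hs0.le hdiv]
    have : ∀ w ∈ sphere (0:ℂ) s, (∮ z in C(0, r), (w - z)⁻¹ • resolvent a w) = 0 := by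
      intro w hw
      have hne' : ∀ z ∈ closedBall (0:ℂ) r, w - z ≠ 0 := by
        intro z hz h
        simp only [mem_sphere, mem_closedBall, dist_zero_right] at hz hw
        rw [sub_eq_zero.1 h] at hw
        linarith
      rw [circleIntegral.integral_smul_const,
        Complex.circleIntegral_eq_zero_of_differentiable_on_off_countable hr0.le countable_empty,
        zero_smul]
      · exact ContinuousOn.inv₀ (by fun_prop) hne'
      · intro z hz
        exact DifferentiableAt.inv (by fun_prop) (hne' z (ball_subset_closedBall hz.1))
    rw [circleIntegral.integral_congr (g := fun _ => (0:A)) hs0.le this]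
    simp [circleIntegral]
  calc (∮ z in C(0, r), resolvent a z) * (∮ z in C(0, r), resolvent a z)
      = ∮ z in C(0, r), resolvent a z * (∮ w in C(0, s), resolvent a w) := by
        rw [← heq, heq]
        exact clm_circleIntegral ((ContinuousLinearMap.mul ℂ A).flip
          (∮ z in C(0, r), resolvent a z)) _ _ _ hcr
    _ = ∮ z in C(0, r), ((2 * Real.pi * Complex.I : ℂ) • resolvent a z
        - ∮ w in C(0, s), (w - z)⁻¹ • resolvent a w) := by
        refine circleIntegral.integral_congr hr0.le fun z hz => ?_
        have := clm_circleIntegral (ContinuousLinearMap.mul ℂ A (resolvent a z)) _ _ _ hcs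
        simp only [ContinuousLinearMap.mul_apply'] at this
        simp only [this, hin z hz]
    _ = _ := by
        rw [circleIntegral.integral_sub _ hint, hzero, _root_.sub_zero, circleIntegral.integral_smul]
        exact (((resolvent_contOn a).mono hr).const_smul _).circleIntegrable hr0.le

/-- Riesz data for a circle in the resolvent set. -/
theorem exists_riesz (a : A) {r : ℝ} (hr0 : 0 < r) (hr : sphere 0 r ⊆ resolventSet ℂ a) :
    ∃ p b : A, p = (2 * Real.pi * Complex.I : ℂ)⁻¹ • (∮ z in C(0, r), resolvent a z) ∧
      p * p = p ∧ a * b = p - 1 ∧ b * a = p - 1 := by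
  have h2 : (2 * Real.pi * Complex.I : ℂ) ≠ 0 := Complex.two_pi_I_ne_zero
  have hcont := (resolvent_contOn a).mono hr
  have hne : ∀ z ∈ sphere (0:ℂ) r, z ≠ 0 := by
    rintro z hz rfl
    simp at hz; linarith
  have hz1 : ContinuousOn (fun z : ℂ => z⁻¹) (sphere 0 r) := ContinuousOn.inv₀ (by fun_prop) hne
  have hcr : CircleIntegrable (resolvent a : ℂ → A) 0 r := hcont.circleIntegrable hr0.le
  have hcb : CircleIntegrable (fun z : ℂ => z⁻¹ • resolvent a z) 0 r :=
    (hz1.smul hcont).circleIntegrable hr0.le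
  have key : (∮ z in C(0, r), (resolvent a z - z⁻¹ • (1:A)))
      = (∮ z in C(0, r), resolvent a z) - (2 * Real.pi * Complex.I : ℂ) • (1:A) := by
    have hc1 : CircleIntegrable (fun z : ℂ => z⁻¹ • (1:A)) 0 r :=
      (hz1.smul continuousOn_const).circleIntegrable hr0.le
    rw [circleIntegral.integral_sub hcr hc1,
      circleIntegral.integral_smul_const]
    have := circleIntegral.integral_sub_center_inv 0 hr0.ne'
    simp only [_root_.sub_zero] at this
    rw [this]
  have hL : a * (∮ z in C(0, r), z⁻¹ • resolvent a z)
      = (∮ z in C(0, r), resolvent a z) - (2 * Real.pi * Complex.I : ℂ) • (1:A) := by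
    rw [← key]
    refine (clm_circleIntegral (ContinuousLinearMap.mul ℂ A a) _ _ _ hcb).trans ?_
    refine circleIntegral.integral_congr hr0.le fun z hz => ?_
    have h := resolvent_mul_cancel a (hr hz)
    rw [sub_mul, ← Algebra.smul_def, sub_eq_iff_eq_add, ← sub_eq_iff_eq_add'] at h
    simp [ContinuousLinearMap.mul_apply', ← h, smul_sub, smul_smul, hne z hz]
  have hR : (∮ z in C(0, r), z⁻¹ • resolvent a z) * a
      = (∮ z in C(0, r), resolvent a z) - (2 * Real.pi * Complex.I : ℂ) • (1:A) := by
    rw [← key]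
    refine (clm_circleIntegral ((ContinuousLinearMap.mul ℂ A).flip a) _ _ _ hcb).trans ?_
    refine circleIntegral.integral_congr hr0.le fun z hz => ?_
    have h := cancel_mul_resolvent a (hr hz)
    rw [_root_.mul_sub, ← Algebra.commutes, ← Algebra.smul_def, sub_eq_iff_eq_add,
      ← sub_eq_iff_eq_add'] at h
    simp [ContinuousLinearMap.mul_apply', ← h, smul_sub, smul_smul, hne z hz]
  refine ⟨_, (2 * Real.pi * Complex.I : ℂ)⁻¹ • (∮ z in C(0, r), z⁻¹ • resolvent a z), rfl, ?_, ?_, ?_⟩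
  · rw [smul_mul_smul_comm, riesz_mul_self a hr0 hr, smul_smul]
    congr 1
    field_simp
  · rw [mul_smul_comm, hL, smul_sub, inv_smul_smul₀ h2]
  · rw [smul_mul_assoc, hR, smul_sub, inv_smul_smul₀ h2]

end RieszAlg

section CB

theorem cbd_zero' (S : Set ℂ) : cbd S 0 = S := by
  unfold cbd; rw [Ordinal.limitRecOn_zero]

theorem cbd_succ' (S : Set ℂ) (α : Ordinal) : cbd S (α + 1) = derivedSet (cbd S α) := by
  unfold cbd; rw [Ordinal.limitRecOn_add_one]

theorem cbd_limit' (S : Set ℂ) (α : Ordinal) (h : Order.IsSuccLimit α) :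
    cbd S α = ⋂ (β : Set.Iio α), cbd S β.1 := by
  unfold cbd; rw [Ordinal.limitRecOn_limit _ _ _ _ h]

theorem cbd_mono {S S' : Set ℂ} (h : S ⊆ S') (α : Ordinal) : cbd S α ⊆ cbd S' α := by
  induction α using Ordinal.limitRecOn with
  | zero => simpa only [cbd_zero'] using h
  | add_one α ih => rw [cbd_succ', cbd_succ']; exact derivedSet_mono _ _ ih
  | limit α hα ih =>
    rw [cbd_limit' _ _ hα, cbd_limit' _ _ hα]
    exact Set.iInter_mono fun β => ih β.1 β.2

theorem subset_cbd_of_perfect {S D : Set ℂ} (hD : Preperfect D) (h : D ⊆ S) (α : Ordinal) :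
    D ⊆ cbd S α := by
  induction α using Ordinal.limitRecOn with
  | zero => simpa only [cbd_zero'] using h
  | add_one α ih =>
    rw [cbd_succ']
    exact (preperfect_iff_subset_derivedSet.1 hD).trans (derivedSet_mono _ _ ih)
  | limit α hα ih =>
    rw [cbd_limit' _ _ hα]
    exact Set.subset_iInter fun β => ih β.1 β.2

theorem countable_of_cbd {S : Set ℂ} (hS : IsClosed S) (β : Ordinal) (h : cbd S β ⊆ {0}) :
    S.Countable := by
  obtain ⟨V, D, hV, hD, rfl⟩ := exists_countable_union_perfect_of_isClosed hS
  have hD0 : D ⊆ {0} := (subset_cbd_of_perfect hD.acc Set.subset_union_right β).trans h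
  exact hV.union ((Set.countable_singleton 0).mono hD0)

end CB
section Ops
open Metric Set

variable {Y : Type*} [NormedAddCommGroup Y] [NormedSpace ℂ Y] [CompleteSpace Y]

theorem mem_resolventSet_iff_bij (S : Y →L[ℂ] Y) (z : ℂ) :
    z ∈ resolventSet ℂ S ↔ Function.Bijective (fun x => z • x - S x) := by
  rw [spectrum.mem_resolventSet_iff, ContinuousLinearMap.isUnit_iff_bijective]
  have : (⇑(algebraMap ℂ (Y →L[ℂ] Y) z - S)) = fun x => z • x - S x := by
    ext x; simp [Algebra.algebraMap_eq_smul_one]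
  rw [this]

theorem resolvent_apply_eq (S : Y →L[ℂ] Y) {z : ℂ} (hz : z ∈ resolventSet ℂ S) (y : Y) :
    resolvent S z (z • y - S y) = y := by
  have h := congrArg (fun L : Y →L[ℂ] Y => L y) (cancel_mul_resolvent S hz)
  simpa [Algebra.algebraMap_eq_smul_one] using h

theorem apply_resolvent_eq (S : Y →L[ℂ] Y) {z : ℂ} (hz : z ∈ resolventSet ℂ S) (y : Y) :
    z • resolvent S z y - S (resolvent S z y) = y := by
  have h := congrArg (fun L : Y →L[ℂ] Y => L y) (resolvent_mul_cancel S hz)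
  simpa [Algebra.algebraMap_eq_smul_one] using h

/-- Riesz integral of `S` vanishes when composed with a map intertwining `S` with an operator
whose spectrum lies off the closed disc. -/
theorem riesz_comp_zero {Z : Type*} [NormedAddCommGroup Z] [NormedSpace ℂ Z] [CompleteSpace Z]
    (S : Y →L[ℂ] Y) (Q : Z →L[ℂ] Z) (p : Y →L[ℂ] Z) (hp : ∀ y, p (S y) = Q (p y))
    {r : ℝ} (hr0 : 0 < r) (hr : sphere 0 r ⊆ resolventSet ℂ S)
    (hQ : closedBall 0 r ⊆ resolventSet ℂ Q) (x : Y) :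
    p ((∮ z in C(0, r), resolvent S z) x) = 0 := by
  have hcr : CircleIntegrable (resolvent S : ℂ → Y →L[ℂ] Y) 0 r :=
    ((resolvent_contOn S).mono hr).circleIntegrable hr0.le
  have h1 := clm_circleIntegral (p.comp (ContinuousLinearMap.apply ℂ Y x)) _ _ _ hcr
  simp only [ContinuousLinearMap.comp_apply, ContinuousLinearMap.apply_apply] at h1
  rw [h1]
  have hcq : CircleIntegrable (resolvent Q : ℂ → Z →L[ℂ] Z) 0 r :=
    ((resolvent_contOn Q).mono (sphere_subset_closedBall.trans hQ)).circleIntegrable hr0.le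
  have h2 := clm_circleIntegral (ContinuousLinearMap.apply ℂ Z (p x)) _ _ _ hcq
  simp only [ContinuousLinearMap.apply_apply] at h2
  rw [Complex.circleIntegral_eq_zero_of_differentiable_on_off_countable hr0.le countable_empty
    ((resolvent_contOn Q).mono hQ) fun z hz => (spectrum.hasDerivAt_resolvent_const_left
      (hQ (ball_subset_closedBall hz.1))).differentiableAt] at h2
  have h3 : (∮ z in C(0, r), p (resolvent S z x)) = ∮ z in C(0, r), resolvent Q z (p x) := by
    refine circleIntegral.integral_congr hr0.le fun z hz => ?_
    have e := apply_resolvent_eq S (hr hz) x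
    have e2 := resolvent_apply_eq Q (hQ (sphere_subset_closedBall hz)) (p (resolvent S z x))
    rw [← hp, ← map_smul, ← map_sub, e] at e2
    exact e2.symm
  rw [h3, ← h2]
  simp

theorem restr_apply_coe (T : Y →L[ℂ] Y) (M : Submodule ℂ Y) (hM : ∀ x ∈ M, T x ∈ M) (x : M) :
    (restr T M hM x : Y) = T x := rfl

theorem gInv_of_proj
    (T : Y →L[ℂ] Y) (β : Ordinal) (N : Submodule ℂ Y) (hN : ∀ x ∈ N, T x ∈ N)
    (hNc : IsClosed (N : Set Y)) (hcb : cbd (spectrum ℂ (restr T N hN)) β ⊆ {0})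
    (P B : Y →L[ℂ] Y) (hPP : P * P = P) (hTB : T * B = P - 1) (hBT : B * T = P - 1)
    (hPN : ∀ x, P x ∈ N) : GInv β T := by
  have : CompleteSpace N := hNc.completeSpace_coe
  have hTP : T * P = P * T := by
    have : P = T * B + 1 := by rw [hTB]; abel
    rw [this, mul_add, add_mul, mul_assoc T B T, hBT, hTB, mul_one, one_mul]
  have hBP : B * P = P * B := by
    have h1 : P = T * B + 1 := by rw [hTB]; abel
    have h2 : B * (T * B + 1) = (T * B + 1) * B := by
      rw [mul_add, add_mul, ← mul_assoc, hBT, hTB, mul_one, one_mul]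
    rwa [← h1] at h2
  have hPP' : ∀ x, P (P x) = P x := fun x => congrArg (fun L : Y →L[ℂ] Y => L x) hPP
  have hTB' : ∀ x, T (B x) = P x - x := fun x => congrArg (fun L : Y →L[ℂ] Y => L x) hTB
  have hBT' : ∀ x, B (T x) = P x - x := fun x => congrArg (fun L : Y →L[ℂ] Y => L x) hBT
  have hTP' : ∀ x, T (P x) = P (T x) := fun x => congrArg (fun L : Y →L[ℂ] Y => L x) hTP
  have hBP' : ∀ x, B (P x) = P (B x) := fun x => congrArg (fun L : Y →L[ℂ] Y => L x) hBP
  let M1 : Submodule ℂ Y := LinearMap.ker (P : Y →ₗ[ℂ] Y)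
  let N1 : Submodule ℂ Y := LinearMap.ker ((1 - P : Y →L[ℂ] Y) : Y →ₗ[ℂ] Y)
  have hM1 : ∀ x, x ∈ M1 ↔ P x = 0 := fun x => Iff.rfl
  have hN1 : ∀ x, x ∈ N1 ↔ P x = x := fun x => by
    have : x ∈ N1 ↔ x - P x = 0 := Iff.rfl
    rw [this, sub_eq_zero, eq_comm]
  have hM1c : IsClosed (M1 : Set Y) := ContinuousLinearMap.isClosed_ker P
  have hN1c : IsClosed (N1 : Set Y) := ContinuousLinearMap.isClosed_ker (1 - P)
  have : CompleteSpace M1 := hM1c.completeSpace_coe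
  have : CompleteSpace N1 := hN1c.completeSpace_coe
  have hM1T : ∀ x ∈ M1, T x ∈ M1 := fun x hx => by
    rw [hM1] at hx ⊢; rw [← hTP', hx, map_zero]
  have hN1T : ∀ x ∈ N1, T x ∈ N1 := fun x hx => by
    rw [hN1] at hx ⊢; rw [← hTP', hx]
  refine ⟨M1, N1, hM1T, hN1T, hM1c, hN1c, ?_, ?_, ?_⟩
  · constructor
    · rw [Submodule.disjoint_def]
      intro x h1 h2
      rw [hM1] at h1; rw [hN1] at h2
      rw [← h2, h1]
    · rw [codisjoint_iff, eq_top_iff]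
      intro x _
      refine Submodule.mem_sup.2 ⟨x - P x, ?_, P x, ?_, by abel⟩
      · rw [hM1, map_sub, hPP', _root_.sub_self]
      · rw [hN1, hPP']
  · rw [ContinuousLinearMap.isUnit_iff_bijective]
    constructor
    · rw [injective_iff_map_eq_zero]
      intro x hx
      have h1 : T x = 0 := congrArg Subtype.val hx
      have h2 := hBT' x
      rw [h1, map_zero, (hM1 x).1 x.2, _root_.zero_sub, eq_comm, neg_eq_zero] at h2
      exact Subtype.ext h2
    · intro y
      have hy := (hM1 y).1 y.2
      refine ⟨⟨-B y, ?_⟩, Subtype.ext ?_⟩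
      · rw [hM1, map_neg, ← hBP', hy, map_zero, neg_zero]
      · rw [restr_apply_coe]
        simp only [map_neg, hTB', hy]
        simp
  · refine (cbd_mono ?_ β).trans hcb
    intro z hz hzN
    refine hz ?_
    have hle : ∀ x ∈ N1, x ∈ N := fun x hx => by
      rw [← (hN1 x).1 hx]; exact hPN x
    have hzN' := (mem_resolventSet_iff_bij _ z).1 hzN
    refine (mem_resolventSet_iff_bij _ z).2 ⟨?_, ?_⟩
    · intro x y hxy
      have h1 : z • (x : Y) - T x = z • (y : Y) - T y := congrArg Subtype.val hxy
      have h2 : (⟨x, hle x x.2⟩ : N) = ⟨y, hle y y.2⟩ := hzN'.1 (Subtype.ext h1)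
      exact Subtype.ext (congrArg (fun n : N => (n : Y)) h2)
    · intro y
      obtain ⟨n, hn⟩ := hzN'.2 ⟨y, hle y y.2⟩
      have hn' : z • (n : Y) - T n = y := congrArg Subtype.val hn
      refine ⟨⟨P n, (hN1 _).2 (hPP' _)⟩, Subtype.ext ?_⟩
      change z • P n - T (P n) = y
      rw [hTP', ← map_smul, ← map_sub, hn', (hN1 _).1 y.2]

theorem mem_resolventSet_of_quot {Z : Type*} [NormedAddCommGroup Z] [NormedSpace ℂ Z]
    [CompleteSpace Z] (T : Y →L[ℂ] Y) (N : Submodule ℂ Y) (hN : ∀ x ∈ N, T x ∈ N)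
    (hNc : IsClosed (N : Set Y))
    (p : Y →L[ℂ] Z) (hpk : ∀ x, p x = 0 ↔ x ∈ N) (hps : Function.Surjective p)
    (Q : Z →L[ℂ] Z) (hp : ∀ y, p (T y) = Q (p y)) (z : ℂ)
    (hzN : z ∈ resolventSet ℂ (restr T N hN)) (hzQ : z ∈ resolventSet ℂ Q) :
    z ∈ resolventSet ℂ T := by
    have : CompleteSpace N := hNc.completeSpace_coe
    rw [mem_resolventSet_iff_bij] at hzQ
    rw [mem_resolventSet_iff_bij] at hzN ⊢
    have hpz : ∀ x, p (z • x - T x) = z • p x - Q (p x) := fun x => by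
      rw [map_sub, map_smul, hp]
    constructor
    · intro x y hxy
      have hpxy : p x = p y := hzQ.1 (by simp only [← hpz]; exact congrArg p hxy)
      have hmem : x - y ∈ N := by rw [← hpk, map_sub, hpxy, _root_.sub_self]
      have : (⟨x - y, hmem⟩ : N) = 0 := hzN.1 (Subtype.ext (by
        have hxy' : z • x - T x = z • y - T y := hxy
        have : z • (x - y) - T (x - y) = 0 := by
          rw [smul_sub, map_sub, sub_sub_sub_comm, hxy', _root_.sub_self]
        simpa [restr_apply_coe] using this))
      exact sub_eq_zero.1 (congrArg Subtype.val this)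
    · intro y
      obtain ⟨q, hq⟩ := hzQ.2 (p y)
      obtain ⟨x, rfl⟩ := hps q
      have hmem : y - (z • x - T x) ∈ N := by
        rw [← hpk, map_sub, hpz]; simp only [] at hq; rw [hq, _root_.sub_self]
      obtain ⟨n, hn⟩ := hzN.2 ⟨_, hmem⟩
      have hn' : z • (n : Y) - T n = y - (z • x - T x) := congrArg Subtype.val hn
      refine ⟨x + n, ?_⟩
      simp only [smul_add, map_add]
      rw [add_sub_add_comm, hn']
      abel

theorem exists_radius {S : Set ℝ} (hS : S.Countable) {ε : ℝ} (hε : 0 < ε) :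
    ∃ r : ℝ, r ∈ Ioo 0 ε ∧ r ∉ S := by
  by_contra! h
  exact (Cardinal.Real.Ioo_countable_iff.1 (hS.mono h)).not_gt hε

theorem gInv_of_quot {Z : Type*} [NormedAddCommGroup Z] [NormedSpace ℂ Z] [CompleteSpace Z]
    (T : Y →L[ℂ] Y) (β : Ordinal) (N : Submodule ℂ Y) (hN : ∀ x ∈ N, T x ∈ N)
    (hNc : IsClosed (N : Set Y)) (hcb : cbd (spectrum ℂ (restr T N hN)) β ⊆ {0})
    (p : Y →L[ℂ] Z) (hpk : ∀ x, p x = 0 ↔ x ∈ N) (hps : Function.Surjective p)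
    (Q : Z →L[ℂ] Z) (hp : ∀ y, p (T y) = Q (p y)) (hQ : IsUnit Q) : GInv β T := by
  have : CompleteSpace N := hNc.completeSpace_coe
  have h0 : (0:ℂ) ∈ resolventSet ℂ Q := by
    rw [spectrum.mem_resolventSet_iff]; simpa using hQ.neg
  obtain ⟨ε, hε, hball⟩ := Metric.isOpen_iff.1 (spectrum.isOpen_resolventSet Q) 0 h0
  -- a good radius
  have hcl : IsClosed (spectrum ℂ (restr T N hN)) := spectrum.isClosed (𝕜 := ℂ) (restr T N hN)
  have hcount0 : (spectrum ℂ (restr T N hN)).Countable := countable_of_cbd hcl β hcb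
  have hcount : (norm '' spectrum ℂ (restr T N hN)).Countable := hcount0.image norm
  obtain ⟨r, hr, hrK⟩ : ∃ r : ℝ, r ∈ Ioo 0 ε ∧ r ∉ norm '' spectrum ℂ (restr T N hN) :=
    exists_radius hcount hε
  have hr0 : 0 < r := hr.1
  have hQr : closedBall 0 r ⊆ resolventSet ℂ Q :=
    (closedBall_subset_ball hr.2).trans hball
  have hTr : sphere 0 r ⊆ resolventSet ℂ T := by
    intro z hz
    have hzQ := hQr (sphere_subset_closedBall hz)
    have hzN : z ∈ resolventSet ℂ (restr T N hN) := by
      by_contra h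
      exact hrK ⟨z, h, by simpa using hz⟩
    exact mem_resolventSet_of_quot T N hN hNc p hpk hps Q hp z hzN hzQ
  obtain ⟨P, B, hP, hPP, hTB, hBT⟩ := exists_riesz T hr0 hTr
  refine gInv_of_proj T β N hN hNc hcb P B hPP hTB hBT fun x => ?_
  rw [← hpk, hP, ContinuousLinearMap.smul_apply, map_smul,
    riesz_comp_zero T Q p hp hr0 hTr hQr, smul_zero]

/-- The main direction. -/
theorem gInv_of_algebraic (T : Y →L[ℂ] Y) (β : Ordinal) (M N : Submodule ℂ Y)
    (hM : ∀ x ∈ M, T x ∈ M) (hN : ∀ x ∈ N, T x ∈ N) (hNc : IsClosed (N : Set Y))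
    (hc : IsCompl M N) (hb : Function.Bijective (restr T M hM))
    (hcb : cbd (spectrum ℂ (restr T N hN)) β ⊆ {0}) : GInv β T := by
  have := hNc
  let p : Y →L[ℂ] Y ⧸ N := N.mkQL
  have hpk : ∀ x, p x = 0 ↔ x ∈ N := fun x => Submodule.Quotient.mk_eq_zero N
  have hps : Function.Surjective p := Submodule.Quotient.mk_surjective N
  let Q : (Y ⧸ N) →L[ℂ] (Y ⧸ N) := N.liftQL (p.comp T) (fun x hx => (hpk _).2 (hN x hx))
  have hp : ∀ y, p (T y) = Q (p y) := fun y => rfl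
  -- the induced operator on the quotient is invertible
  have hQ : IsUnit Q := by
    rw [ContinuousLinearMap.isUnit_iff_bijective]
    constructor
    · rw [injective_iff_map_eq_zero]
      intro q hq
      obtain ⟨x, rfl⟩ := hps q
      rw [← hp, hpk] at hq
      obtain ⟨m, n, rfl⟩ : ∃ (m : M) (n : N), (m : Y) + n = x := by
        have : x ∈ M ⊔ N := by rw [hc.sup_eq_top]; trivial
        obtain ⟨m, hm, n, hn, h⟩ := Submodule.mem_sup.1 this
        exact ⟨⟨m, hm⟩, ⟨n, hn⟩, h⟩
      rw [map_add] at hq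
      have h1 : T m ∈ N := (Submodule.add_mem_iff_left N (hN n n.2)).1 hq
      have h2 : T m = 0 := Submodule.disjoint_def.1 hc.disjoint _ (hM m m.2) h1
      have h3 : m = 0 := hb.1 (Subtype.ext (by simpa [restr_apply_coe] using h2))
      rw [hpk, h3]; simp
    · intro q
      obtain ⟨x, rfl⟩ := hps q
      have : x ∈ M ⊔ N := by rw [hc.sup_eq_top]; trivial
      obtain ⟨m, hm, n, hn, rfl⟩ := Submodule.mem_sup.1 this
      obtain ⟨m', hm'⟩ := hb.2 ⟨m, hm⟩
      have h1 : T m' = m := congrArg Subtype.val hm'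
      refine ⟨p m', ?_⟩
      rw [← hp, h1, map_add, (hpk n).2 hn, add_zero]
  exact gInv_of_quot T β N hN hNc hcb p hpk hps Q hp hQ

end Ops

/-- `T` is `g_σ^{β+1}`-invertible iff there are `T`-invariant subspaces `M, N` with
`N` closed, `X = M ⊕ N` algebraically, `T|_M : M → M` bijective, and
`acc^β σ(T_N) ⊆ {0}`. -/
theorem gInv_iff_exists_algebraic_decomposition (T : X →L[ℂ] X) (β : Ordinal) :
    GInv β T ↔
      ∃ (M N : Submodule ℂ X) (hM : ∀ x ∈ M, T x ∈ M) (hN : ∀ x ∈ N, T x ∈ N),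
        IsClosed (N : Set X) ∧ IsCompl M N ∧
        Function.Bijective (restr T M hM) ∧
        cbd (spectrum ℂ (restr T N hN)) β ⊆ {0} := by
  constructor
  · rintro ⟨M, N, hM, hN, hMc, hNc, hc, hu, hcb⟩
    haveI : CompleteSpace M := hMc.completeSpace_coe
    exact ⟨M, N, hM, hN, hNc, hc, ContinuousLinearMap.isUnit_iff_bijective.1 hu, hcb⟩
  · rintro ⟨M, N, hM, hN, hNc, hc, hb, hcb⟩
    exact gInv_of_algebraic T β M N hM hN hNc hc hb hcb
end

section
/- Let X be a complex Banach space, T a bounded linear operator on X, and m ≥ 1 an integer. Then T is almost invertible if and only if T^m is almost invertible. -/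
open Ordinal Set

variable {X : Type*} [NormedAddCommGroup X] [NormedSpace ℂ X] [CompleteSpace X]

/-- `T` is almost invertible: there is `(M, N) ∈ Red T` (a pair of closed
`T`-invariant subspaces with `X = M ⊕ N`) such that `T_M` is invertible and
`σ(T_N)` is at most countable. -/
def AlmostInv (T : X →L[ℂ] X) : Prop :=
  ∃ (M N : Submodule ℂ X) (hM : ∀ x ∈ M, T x ∈ M) (hN : ∀ x ∈ N, T x ∈ N),
    IsClosed (M : Set X) ∧ IsClosed (N : Set X) ∧ IsCompl M N ∧
    IsUnit (restr T M hM) ∧ (spectrum ℂ (restr T N hN)).Countable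

set_option linter.unusedSectionVars false

section core
variable {A : Type*} [NormedRing A] [NormedAlgebra ℂ A] [CompleteSpace A]

theorem commute_inverse {R : Type*} [Ring R] {a b : R} (h : Commute a b) :
    Commute a (Ring.inverse b) := by
  by_cases hb : IsUnit b
  · obtain ⟨u, rfl⟩ := hb
    rw [Ring.inverse_unit]
    exact h.units_inv_right
  · rw [Ring.inverse_non_unit _ hb]
    exact Commute.zero_right _

/-- The resolvent-like function `(1 - c Z)⁻¹`. -/
noncomputable def rinv (Z : A) (c : ℂ) : A := Ring.inverse (1 - c • Z)

theorem rinv_mul {Z : A} {c : ℂ} (h : IsUnit (1 - c • Z)) : rinv Z c * (1 - c • Z) = 1 :=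
  Ring.inverse_mul_cancel _ h
theorem mul_rinv {Z : A} {c : ℂ} (h : IsUnit (1 - c • Z)) : (1 - c • Z) * rinv Z c = 1 :=
  Ring.mul_inverse_cancel _ h

theorem rinv_comm {Z T : A} (c : ℂ) (h : Commute T Z) : Commute T (rinv Z c) := by
  unfold rinv
  exact commute_inverse ((Commute.one_right T).sub_right (h.smul_right c))

theorem sq_fact (Z : A) (c : ℂ) : (1 - (c^2) • (Z^2)) = (1 - c • Z) * (1 - (-c) • Z) := by
  rw [pow_two, pow_two]
  simp only [_root_.mul_sub, sub_mul, mul_one, one_mul, smul_mul_smul_comm, neg_smul, mul_neg, mul_smul]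
  simp [smul_smul]

theorem norm_sqrt (d : ℂ) (hd : ‖d‖ = 1) : ∃ c : ℂ, ‖c‖ = 1 ∧ c ^ 2 = d := by
  obtain ⟨c, hc⟩ := IsAlgClosed.exists_pow_nat_eq d (n := 2) (by norm_num)
  refine ⟨c, ?_, hc⟩
  have : ‖c‖ ^ 2 = 1 := by rw [← norm_pow, hc, hd]
  have h0 := norm_nonneg c
  nlinarith

theorem unit_sq {Z : A} (h : ∀ c : ℂ, ‖c‖ = 1 → IsUnit (1 - c • Z)) :
    ∀ c : ℂ, ‖c‖ = 1 → IsUnit (1 - c • Z ^ 2) := by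
  intro d hd
  obtain ⟨c, hc, rfl⟩ := norm_sqrt d hd
  rw [sq_fact]
  exact (h c hc).mul (h (-c) (by simpa using hc))

theorem rinv_sq {Z : A} (h : ∀ c : ℂ, ‖c‖ = 1 → IsUnit (1 - c • Z)) (c : ℂ) (hc : ‖c‖ = 1) :
    (2 : ℂ) • rinv (Z ^ 2) (c ^ 2) = rinv Z c + rinv Z (-c) := by
  have h1 := h c hc
  have h2 := h (-c) (by simpa using hc)
  have h3 := unit_sq h (c ^ 2) (by simp [hc])
  have e : (1 - (c^2) • (Z^2)) * (rinv Z c + rinv Z (-c)) = (2 : ℂ) • (1 : A) := by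
    have hcomm : Commute (1 - c • Z) (1 - (-c) • Z) :=
      (Commute.one_left _).sub_left
        (((Commute.one_right _).sub_right ((Commute.refl Z).smul_right _)).smul_left _)
    rw [mul_add, sq_fact]
    nth_rewrite 1 [hcomm.eq]
    rw [mul_assoc, mul_assoc, mul_rinv h1, mul_rinv h2, mul_one, mul_one, two_smul]
    simp
  have := congrArg (fun x => rinv (Z ^ 2) (c ^ 2) * x) e
  simp only [← mul_assoc, rinv_mul h3, one_mul, mul_smul_comm, mul_one] at this
  exact this.symm

theorem lip_step {Z : A} (h : ∀ c : ℂ, ‖c‖ = 1 → IsUnit (1 - c • Z)) (L : ℝ) (hL0 : 0 ≤ L)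
    (hL : ∀ c d : ℂ, ‖c‖ = 1 → ‖d‖ = 1 → ‖rinv Z c - rinv Z d‖ ≤ L * ‖c - d‖) :
    ∀ c d : ℂ, ‖c‖ = 1 → ‖d‖ = 1 →
      ‖rinv (Z ^ 2) c - rinv (Z ^ 2) d‖ ≤ (L * (3 / 4)) * ‖c - d‖ := by
  have key : ∀ c d : ℂ, ‖c‖ = 1 → ‖d‖ = 1 → ‖c - d‖ ≤ ‖c + d‖ →
      ‖rinv (Z ^ 2) (c ^ 2) - rinv (Z ^ 2) (d ^ 2)‖ ≤ (L * (3 / 4)) * ‖c ^ 2 - d ^ 2‖ := by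
    intro c d hc hd hcd
    have par := parallelogram_law_with_norm ℝ c d
    rw [hc, hd] at par
    have h43 : 4 / 3 ≤ ‖c + d‖ := by
      by_contra hlt
      push Not at hlt
      nlinarith [norm_nonneg (c - d), norm_nonneg (c + d)]
    have hprod : ‖c ^ 2 - d ^ 2‖ = ‖c + d‖ * ‖c - d‖ := by
      rw [← norm_mul]; congr 1; ring
    have hle : ‖c - d‖ ≤ 3 / 4 * ‖c ^ 2 - d ^ 2‖ := by
      rw [hprod]; nlinarith [norm_nonneg (c - d)]
    have e : (2 : ℂ) • (rinv (Z ^ 2) (c ^ 2) - rinv (Z ^ 2) (d ^ 2)) =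
        (rinv Z c - rinv Z d) + (rinv Z (-c) - rinv Z (-d)) := by
      rw [smul_sub, rinv_sq h c hc, rinv_sq h d hd]; abel
    have n1 := hL c d hc hd
    have n2 := hL (-c) (-d) (by simpa using hc) (by simpa using hd)
    have n3 : ‖-c - -d‖ = ‖c - d‖ := by rw [← norm_neg]; congr 1; ring
    rw [n3] at n2
    have n4 := norm_add_le (rinv Z c - rinv Z d) (rinv Z (-c) - rinv Z (-d))
    rw [← e, norm_smul] at n4
    norm_num at n4
    have n5 := mul_le_mul_of_nonneg_left hle hL0
    linarith
  intro c d hc hd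
  obtain ⟨c, hc', rfl⟩ := norm_sqrt c hc
  obtain ⟨d, hd', rfl⟩ := norm_sqrt d hd
  rcases le_total ‖c - d‖ ‖c + d‖ with hle | hle
  · exact key c d hc' hd' hle
  · have := key c (-d) hc' (by simpa using hd') (by simpa [sub_eq_add_neg] using hle)
    simpa using this

theorem lip_zero {Z : A} (h : ∀ c : ℂ, ‖c‖ = 1 → IsUnit (1 - c • Z)) :
    ∃ L : ℝ, 0 ≤ L ∧
    ∀ c d : ℂ, ‖c‖ = 1 → ‖d‖ = 1 → ‖rinv Z c - rinv Z d‖ ≤ L * ‖c - d‖ := by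
  have hcont : ContinuousOn (fun c : ℂ => rinv Z c) (Metric.sphere 0 1) := by
    intro c hc
    have hu := h c (by simpa using hc)
    apply ContinuousAt.continuousWithinAt
    have h1 : ContinuousAt (Ring.inverse : A → A) (1 - c • Z) := by
      obtain ⟨u, hu⟩ := hu
      rw [← hu]
      exact NormedRing.inverse_continuousAt u
    have h2 : ContinuousAt (fun c : ℂ => 1 - c • Z) c := by fun_prop
    exact ContinuousAt.comp (f := fun c : ℂ => 1 - c • Z) (g := (Ring.inverse : A → A)) h1 h2
  obtain ⟨C, hC⟩ := (isCompact_sphere (0:ℂ) 1).exists_bound_of_continuousOn hcont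
  have hC0 : 0 ≤ C := (norm_nonneg _).trans (hC 1 (by simp))
  refine ⟨C * ‖Z‖ * C, by positivity, ?_⟩
  intro c d hc hd
  have e : rinv Z c - rinv Z d = rinv Z c * ((c - d) • Z) * rinv Z d := by
    have : (c - d) • Z = (1 - d • Z) - (1 - c • Z) := by rw [sub_smul]; abel
    rw [this, _root_.mul_sub, sub_mul, rinv_mul (h c hc), mul_assoc, mul_rinv (h d hd)]; simp
  rw [e]
  have b1 := hC c (by simpa using hc)
  have b2 := hC d (by simpa using hd)
  calc ‖rinv Z c * ((c - d) • Z) * rinv Z d‖ ≤ ‖rinv Z c‖ * (‖c - d‖ * ‖Z‖) * ‖rinv Z d‖ := by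
        refine (norm_mul_le _ _).trans ?_
        gcongr
        refine (norm_mul_le _ _).trans ?_
        rw [norm_smul]
    _ ≤ C * (‖c - d‖ * ‖Z‖) * C := by gcongr
    _ = C * ‖Z‖ * C * ‖c - d‖ := by ring

theorem core_proj (B : A) (h : ∀ c : ℂ, ‖c‖ = 1 → IsUnit (1 - c • B)) :
    ∃ P : A, P * P = P ∧ (∀ T : A, Commute T B → Commute T P) ∧
      ∀ δ : ℝ, 0 < δ → ∃ (k : ℕ) (Q : A), (∀ T : A, Commute T B → Commute T Q) ∧
        (1 - B ^ (2 ^ k)) * Q = 1 ∧ ‖Q - P‖ < δ := by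
  have hk : ∀ k : ℕ, ∀ c : ℂ, ‖c‖ = 1 → IsUnit (1 - c • B ^ (2 ^ k)) := by
    intro k
    induction k with
    | zero => simpa using h
    | succ k ih => rw [pow_succ, pow_mul]; exact unit_sq ih
  obtain ⟨L, hL0, hL⟩ := lip_zero h
  have hLk : ∀ k : ℕ, ∀ c d : ℂ, ‖c‖ = 1 → ‖d‖ = 1 →
      ‖rinv (B ^ (2 ^ k)) c - rinv (B ^ (2 ^ k)) d‖ ≤ (L * (3 / 4) ^ k) * ‖c - d‖ := by
    intro k
    induction k with
    | zero => simpa using hL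
    | succ k ih =>
      have := lip_step (hk k) _ (by positivity) ih
      rw [pow_succ 2, pow_mul, pow_succ (3 / 4 : ℝ), ← mul_assoc]; exact this
  set p : ℕ → A := fun k => rinv (B ^ (2 ^ k)) 1 with hp
  set q : ℕ → A := fun k => rinv (B ^ (2 ^ k)) (-1) with hq
  have hpq : ∀ k, ‖p k - q k‖ ≤ (2 * L) * (3 / 4) ^ k := by
    intro k
    have := hLk k 1 (-1) (by simp) (by simp)
    norm_num at this
    simp only [hp, hq]; linarith
  have hrec : ∀ k, (2 : ℂ) • p (k + 1) = p k + q k := by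
    intro k
    have := rinv_sq (hk k) 1 (by simp)
    simp only [hp, hq]
    rw [pow_succ 2, pow_mul]
    simpa using this
  have hstep : ∀ k, dist (p k) (p (k + 1)) ≤ L * (3 / 4) ^ k := by
    intro k
    have e : (2 : ℂ) • (p k - p (k + 1)) = p k - q k := by
      rw [smul_sub, hrec, two_smul]; abel
    have := hpq k
    rw [← e, norm_smul] at this
    norm_num at this
    rw [dist_eq_norm]; linarith
  obtain ⟨P, hP⟩ := cauchySeq_tendsto_of_complete
    (cauchySeq_of_le_geometric (3 / 4) L (by norm_num) hstep)
  have hd0 : Filter.Tendsto (fun k => p k - q k) Filter.atTop (nhds 0) := by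
    apply squeeze_zero_norm hpq
    have := (tendsto_pow_atTop_nhds_zero_of_lt_one (r := (3/4 : ℝ))
      (by norm_num) (by norm_num)).const_mul (2 * L)
    simpa using this
  have hQ : Filter.Tendsto q Filter.atTop (nhds P) := by
    have := hP.sub hd0
    simpa using this
  have hcp : ∀ T : A, Commute T B → ∀ k, Commute T (p k) :=
    fun T hT k => rinv_comm _ (hT.pow_right _)
  have hpe : ∀ k, (1 - B ^ (2 ^ k)) * p k = 1 := by
    intro k
    have := mul_rinv (hk k 1 (by simp))
    simpa using this
  have hqe : ∀ k, (1 + B ^ (2 ^ k)) * q k = 1 := by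
    intro k
    have := mul_rinv (hk k (-1) (by simp))
    simpa using this
  refine ⟨P, ?_, ?_, ?_⟩
  · -- p q - q = B^n p q, 2 B^n p q = p - q
    have e : ∀ k, (2 : ℂ) • (p k * q k - q k) = p k - q k := by
      intro k
      have h1 : B ^ (2 ^ k) * p k = p k - 1 := by
        have := hpe k
        rw [sub_mul, one_mul] at this
        rw [← this]; abel
      have h2 : B ^ (2 ^ k) * q k = 1 - q k := by
        have := hqe k
        rw [add_mul, one_mul] at this
        rw [← this]; abel
      have hc : Commute (B ^ (2 ^ k)) (p k) := hcp _ ((Commute.refl B).pow_left _) k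
      have h3 : (p k - 1) * q k = p k * (1 - q k) := by
        rw [← h1, ← h2, hc.eq, mul_assoc]
      rw [sub_mul, one_mul, _root_.mul_sub, mul_one] at h3
      rw [two_smul]
      nth_rewrite 1 [h3]
      abel
    have l1 : Filter.Tendsto (fun k => (2 : ℂ) • (p k * q k - q k)) Filter.atTop
        (nhds ((2 : ℂ) • (P * P - P))) := ((hP.mul hQ).sub hQ).const_smul _
    have l2 : Filter.Tendsto (fun k => (2 : ℂ) • (p k * q k - q k)) Filter.atTop (nhds 0) := by
      simpa only [e] using hd0
    have := tendsto_nhds_unique l1 l2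
    rw [smul_eq_zero] at this
    rcases this with h | h
    · norm_num at h
    · exact sub_eq_zero.mp h
  · intro T hT
    exact tendsto_nhds_unique (hP.const_mul T)
      ((hP.mul_const T).congr fun k => ((hcp T hT k).eq).symm)
  · intro δ hδ
    obtain ⟨k, hk⟩ := ((Metric.tendsto_nhds.mp hP) δ hδ).exists
    exact ⟨k, p k, fun T hT => hcp T hT k, hpe k, by rwa [dist_eq_norm] at hk⟩

theorem ball_of_unit (a : A) (h : IsUnit a) :
    ∃ ε > 0, ∀ μ : ℂ, ‖μ‖ < ε → μ ∉ spectrum ℂ a := by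
  have ho : IsOpen (spectrum ℂ a)ᶜ := (spectrum.isClosed a).isOpen_compl
  have h0 : (0 : ℂ) ∈ (spectrum ℂ a)ᶜ := (spectrum.zero_notMem_iff ℂ).mpr h
  obtain ⟨ε, hε, hb⟩ := Metric.isOpen_iff.mp ho 0 h0
  exact ⟨ε, hε, fun μ hμ => hb (by simpa using hμ)⟩

end core
theorem ball_of_unit' {Y : Type*} [NormedAddCommGroup Y] [NormedSpace ℂ Y] [CompleteSpace Y]
    (a : Y →L[ℂ] Y) (h : IsUnit a) :
    ∃ ε > 0, ∀ μ : ℂ, ‖μ‖ < ε → μ ∉ spectrum ℂ a := ball_of_unit a h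
theorem ball_of_unit_sub (M : Submodule ℂ X) (hM : IsClosed (M : Set X)) (a : M →L[ℂ] M) (h : IsUnit a) :
    ∃ ε > 0, ∀ μ : ℂ, ‖μ‖ < ε → μ ∉ spectrum ℂ a := by
  have : CompleteSpace M := hM.completeSpace_coe
  exact ball_of_unit' (Y := M) a h


/-- `a` lies in the bicommutant of `T`. -/
def BiC {A : Type*} [Ring A] (T a : A) : Prop := ∀ y : A, Commute y T → Commute y a

section bic
variable {A : Type*} [Ring A] [Algebra ℂ A] {T a b : A}
theorem BiC.self : BiC T T := fun _ h => h
theorem BiC.one : BiC T 1 := fun _ _ => Commute.one_right _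
theorem BiC.mul (ha : BiC T a) (hb : BiC T b) : BiC T (a * b) :=
  fun y h => (ha y h).mul_right (hb y h)
theorem BiC.add (ha : BiC T a) (hb : BiC T b) : BiC T (a + b) :=
  fun y h => (ha y h).add_right (hb y h)
theorem BiC.sub (ha : BiC T a) (hb : BiC T b) : BiC T (a - b) :=
  fun y h => (ha y h).sub_right (hb y h)
theorem BiC.pow (ha : BiC T a) (n : ℕ) : BiC T (a ^ n) :=
  fun y h => (ha y h).pow_right n
theorem BiC.smul (ha : BiC T a) (c : ℂ) : BiC T (c • a) :=
  fun y h => (ha y h).smul_right c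
theorem BiC.inv (ha : BiC T a) : BiC T (Ring.inverse a) :=
  fun y h => commute_inverse (ha y h)
theorem BiC.comm (ha : BiC T a) (hb : BiC T b) : Commute a b :=
  hb a (ha T (Commute.refl T)).symm
theorem BiC.sum {s : Finset ℕ} {f : ℕ → A} (h : ∀ i ∈ s, BiC T (f i)) :
    BiC T (∑ i ∈ s, f i) := fun y hy => Commute.sum_right s f y fun i hi => h i hi y hy
end bic

theorem restr_apply (T : X →L[ℂ] X) (M : Submodule ℂ X) (hM : ∀ x ∈ M, T x ∈ M) (x : M) :
    ((restr T M hM x : M) : X) = T x := rfl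

theorem restr_pow_mem (T : X →L[ℂ] X) (M : Submodule ℂ X) (hM : ∀ x ∈ M, T x ∈ M) (m : ℕ) :
    ∀ x ∈ M, (T ^ m) x ∈ M := by
  induction m with
  | zero => simp
  | succ m ih => intro x hx; rw [pow_succ]; exact ih _ (hM x hx)

theorem restr_pow (T : X →L[ℂ] X) (M : Submodule ℂ X) (hM : ∀ x ∈ M, T x ∈ M) (m : ℕ)
    (h : ∀ x ∈ M, (T ^ m) x ∈ M) : restr (T ^ m) M h = (restr T M hM) ^ m := by
  induction m with
  | zero => ext x; simp [restr_apply]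
  | succ m ih =>
    ext x
    rw [restr_apply, pow_succ, pow_succ, ← ih (restr_pow_mem T M hM m)]
    rfl

theorem alg_sub_mem (T : X →L[ℂ] X) (M : Submodule ℂ X) (hM : ∀ x ∈ M, T x ∈ M) (μ : ℂ) :
    ∀ x ∈ M, (algebraMap ℂ (X →L[ℂ] X) μ - T) x ∈ M := by
  intro x hx
  exact M.sub_mem (by simpa [Algebra.algebraMap_eq_smul_one] using M.smul_mem μ hx) (hM x hx)

theorem restr_alg_sub (T : X →L[ℂ] X) (M : Submodule ℂ X) (hM : ∀ x ∈ M, T x ∈ M) (μ : ℂ) :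
    algebraMap ℂ (M →L[ℂ] M) μ - restr T M hM =
      restr (algebraMap ℂ (X →L[ℂ] X) μ - T) M (alg_sub_mem T M hM μ) := by
  ext x
  rw [restr_apply]
  simp [Algebra.algebraMap_eq_smul_one, restr_apply]

theorem unit_of_inv (T V : X →L[ℂ] X) (N : Submodule ℂ X) (hT : ∀ x ∈ N, T x ∈ N)
    (hV : ∀ x ∈ N, V x ∈ N) (h1 : ∀ x ∈ N, T (V x) = x) (h2 : ∀ x ∈ N, V (T x) = x) :
    IsUnit (restr T N hT) :=
  ⟨⟨restr T N hT, restr V N hV, by ext x; exact h1 x x.2, by ext x; exact h2 x x.2⟩, rfl⟩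

theorem ker_inv {F R : X →L[ℂ] X} (h : Commute F R) :
    ∀ x ∈ LinearMap.ker R.toLinearMap, F x ∈ LinearMap.ker R.toLinearMap := by
  intro x hx
  have hx : R x = 0 := hx
  change R (F x) = 0
  have : (R * F) x = (F * R) x := by rw [h.eq]
  have h2 : R (F x) = F (R x) := this
  rw [h2, hx, map_zero]

theorem unit_ker {F V R K : X →L[ℂ] X} (hFV : Commute F V) (hV : Commute V R) (hK : Commute R K)
    (e : F * V = 1 - R * K)
    (hF : ∀ x ∈ LinearMap.ker R.toLinearMap, F x ∈ LinearMap.ker R.toLinearMap) :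
    IsUnit (restr F (LinearMap.ker R.toLinearMap) hF) := by
  have key : ∀ x ∈ LinearMap.ker R.toLinearMap, (F * V) x = x := by
    intro x hx
    have hx : R x = 0 := hx
    rw [e, hK.eq]
    simp [hx]
  refine unit_of_inv F V _ hF (ker_inv hV) key ?_
  intro x hx
  have := key x hx
  rw [hFV.eq] at this
  exact this

theorem isUnit_of_restr (F : X →L[ℂ] X) (M N : Submodule ℂ X) (hM : ∀ x ∈ M, F x ∈ M)
    (hN : ∀ x ∈ N, F x ∈ N) (hc : IsCompl M N) (h1 : IsUnit (restr F M hM))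
    (h2 : IsUnit (restr F N hN)) : IsUnit F := by
  obtain ⟨u, hu⟩ := h1
  obtain ⟨v, hv⟩ := h2
  have ul : ∀ y : M, restr F M hM ((↑u⁻¹ : M →L[ℂ] M) y) = y := by
    intro y; rw [← hu]; change ((u : M →L[ℂ] M) * ↑u⁻¹) y = y; rw [u.mul_inv]; rfl
  have ur : ∀ y : M, (↑u⁻¹ : M →L[ℂ] M) (restr F M hM y) = y := by
    intro y; rw [← hu]; change (↑u⁻¹ * (u : M →L[ℂ] M)) y = y; rw [u.inv_mul]; rfl
  have vl : ∀ y : N, restr F N hN ((↑v⁻¹ : N →L[ℂ] N) y) = y := by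
    intro y; rw [← hv]; change ((v : N →L[ℂ] N) * ↑v⁻¹) y = y; rw [v.mul_inv]; rfl
  have vr : ∀ y : N, (↑v⁻¹ : N →L[ℂ] N) (restr F N hN y) = y := by
    intro y; rw [← hv]; change (↑v⁻¹ * (v : N →L[ℂ] N)) y = y; rw [v.inv_mul]; rfl
  rw [ContinuousLinearMap.isUnit_iff_bijective]
  have dec : ∀ x : X, ∃ a ∈ M, ∃ b ∈ N, a + b = x := by
    intro x
    have : x ∈ M ⊔ N := by rw [hc.sup_eq_top]; trivial
    exact Submodule.mem_sup.mp this
  constructor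
  · rw [injective_iff_map_eq_zero]
    intro x hx
    obtain ⟨a, ha, b, hb, rfl⟩ := dec x
    rw [map_add] at hx
    have hFa : F a = 0 := by
      have hm : F a ∈ M ⊓ N := by
        refine ⟨hM a ha, ?_⟩
        rw [eq_neg_of_add_eq_zero_left hx]
        exact N.neg_mem (hN b hb)
      rw [hc.inf_eq_bot] at hm
      simpa using hm
    have hFb : F b = 0 := by simpa [hFa] using hx
    have ea : restr F M hM ⟨a, ha⟩ = 0 := Subtype.ext hFa
    have eb : restr F N hN ⟨b, hb⟩ = 0 := Subtype.ext hFb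
    have ha0 := ur ⟨a, ha⟩
    have hb0 := vr ⟨b, hb⟩
    rw [ea, map_zero] at ha0
    rw [eb, map_zero] at hb0
    have e1 : (0 : X) = a := congrArg Subtype.val ha0
    have e2 : (0 : X) = b := congrArg Subtype.val hb0
    rw [← e1, ← e2, add_zero]
  · intro y
    obtain ⟨a, ha, b, hb, rfl⟩ := dec y
    refine ⟨((↑u⁻¹ : M →L[ℂ] M) ⟨a, ha⟩ : M) + ((↑v⁻¹ : N →L[ℂ] N) ⟨b, hb⟩ : N), ?_⟩
    rw [map_add]
    congr 1
    · exact congrArg Subtype.val (ul ⟨a, ha⟩)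
    · exact congrArg Subtype.val (vl ⟨b, hb⟩)

theorem isCompl_ker (P : X →L[ℂ] X) (hP : P * P = P) :
    IsCompl (LinearMap.ker P.toLinearMap) (LinearMap.ker (1 - P).toLinearMap) := by
  have hPP : ∀ x, P (P x) = P x := fun x => by
    change (P * P) x = P x
    rw [hP]
  constructor
  · rw [Submodule.disjoint_def]
    intro x h1 h2
    have h1 : P x = 0 := h1
    have h2 : x - P x = 0 := h2
    simpa [h1] using h2
  · rw [codisjoint_iff, eq_top_iff]
    intro x _
    refine Submodule.mem_sup.mpr ⟨x - P x, ?_, P x, ?_, by abel⟩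
    · change P (x - P x) = 0
      rw [map_sub, hPP, _root_.sub_self]
    · change P x - P (P x) = 0
      rw [hPP, _root_.sub_self]

theorem countable_pow (s t : Set ℂ) (m : ℕ) (hm : 1 ≤ m) (ht : t.Countable)
    (h : ∀ z ∈ s, z ^ m ∈ t) : s.Countable := by
  have : s ⊆ ⋃ w ∈ t, {z : ℂ | z ^ m = w} := by
    intro z hz
    simp only [Set.mem_iUnion]
    exact ⟨z ^ m, h z hz, rfl⟩
  refine Set.Countable.mono this (ht.biUnion fun w _ => ?_)
  have : {z : ℂ | z ^ m = w} ⊆ ((Polynomial.nthRoots m w).toFinset : Set ℂ) := by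
    intro z hz
    simp only [Finset.mem_coe, Multiset.mem_toFinset]
    exact (Polynomial.mem_nthRoots (by omega)).mpr hz
  exact ((Finset.finite_toSet _).subset this).countable

set_option maxHeartbeats 1000000 in
theorem almostInv_of_pow (T : X →L[ℂ] X) (m : ℕ) (hm : 1 ≤ m) (h : AlmostInv (T ^ m)) :
    AlmostInv T := by
  obtain ⟨M, N, hM, hN, cM, cN, hc, hu, hcount⟩ := h
  have : CompleteSpace M := cM.completeSpace_coe
  set S := T ^ m with hS
  -- a disc around `0` missing the spectrum on `M`
  obtain ⟨ε, hε, hball⟩ : ∃ ε > 0, ∀ μ : ℂ, ‖μ‖ < ε → μ ∉ spectrum ℂ (restr S M hM) :=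
    ball_of_unit_sub M cM _ hu
  obtain ⟨r, hrn, hr0, hrε⟩ : ∃ r : ℝ, r ∉ (fun z : ℂ => ‖z‖) '' (spectrum ℂ (restr S N hN)) ∧
      0 < r ∧ r < ε := by
    have hd := (hcount.image (fun z : ℂ => ‖z‖)).dense_compl ℝ
    obtain ⟨r, h1, h2⟩ := hd.exists_between hε
    exact ⟨r, h1, h2.1, h2.2⟩
  have hspec : ∀ μ : ℂ, ‖μ‖ < ε → μ ∉ spectrum ℂ (restr S N hN) →
      IsUnit (algebraMap ℂ (X →L[ℂ] X) μ - S) := by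
    intro μ h1 h2
    have h1 := hball μ h1
    rw [spectrum.notMem_iff, restr_alg_sub] at h1 h2
    exact isUnit_of_restr _ M N _ _ hc h1 h2
  have hrC : (r : ℂ) ≠ 0 := by exact_mod_cast hr0.ne'
  set B : X →L[ℂ] X := (r : ℂ)⁻¹ • S with hB
  have hBu : ∀ c : ℂ, ‖c‖ = 1 → IsUnit (1 - c • B) := by
    intro c hc1
    have hc0 : c ≠ 0 := by rintro rfl; simp at hc1
    have hn : ‖(r : ℂ) / c‖ = r := by rw [norm_div, hc1]; simp [abs_of_pos hr0]
    have hu := hspec (r / c) (by rw [hn]; exact hrε) (fun hmem => hrn ⟨_, hmem, hn⟩)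
    have e : 1 - c • B = (Units.mk0 (c / r) (div_ne_zero hc0 hrC)) •
        (algebraMap ℂ (X →L[ℂ] X) (r / c) - S) := by
      have e1 : c / r * (r / c) = 1 := by field_simp
      rw [Units.smul_def, Units.val_mk0, smul_sub, Algebra.algebraMap_eq_smul_one, hB,
        smul_smul, smul_smul, e1, ← div_eq_mul_inv, one_smul]
    rw [e]
    exact hu.smul _
  obtain ⟨P, hPP, hPc, hPQ⟩ := core_proj B hBu
  obtain ⟨k, Q, hQc, hQe, hQP⟩ := hPQ (1 / 2) (by norm_num)
  set n := 2 ^ k with hn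
  have hn1 : 1 ≤ n := Nat.one_le_two_pow
  have bT : BiC T T := BiC.self
  have bS : BiC T S := bT.pow m
  have bB : BiC T B := bS.smul _
  have bP : BiC T P := fun y hy => hPc y (bB y hy)
  have bQ : BiC T Q := fun y hy => hQc y (bB y hy)
  have b1 : BiC T 1 := BiC.one
  have bR : BiC T (1 - P) := b1.sub bP
  have hBQ : B ^ n * Q = Q - 1 := by
    rw [sub_mul, one_mul] at hQe
    rw [← hQe]; abel
  have hTR := ker_inv (bT.comm bR)
  have hSR := ker_inv (bS.comm bR)
  refine ⟨LinearMap.ker P.toLinearMap, LinearMap.ker (1 - P).toLinearMap,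
    ker_inv (bT.comm bP), hTR, P.isClosed_ker, (1 - P).isClosed_ker, isCompl_ker P hPP, ?_, ?_⟩
  · set U := 1 - (Q - P) with hU
    have uU : IsUnit U := isUnit_one_sub_of_norm_lt_one (by linarith)
    have bU : BiC T U := b1.sub (bQ.sub bP)
    set W : X →L[ℂ] X := ((r : ℂ)⁻¹ ^ n) • T ^ (m * n - 1) with hW
    have bW : BiC T W := (bT.pow _).smul _
    have hTW : T * W = B ^ n := by
      rw [hW, hB, smul_pow, hS, ← pow_mul, mul_smul_comm, ← pow_succ', Nat.sub_add_cancel]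
      exact Nat.mul_pos hm hn1
    have bV : BiC T ((-1 : ℂ) • (W * Q * Ring.inverse U)) := ((bW.mul bQ).mul bU.inv).smul _
    refine unit_ker (bT.comm bV) (bV.comm bP) (bP.comm bU.inv) ?_ _
    rw [mul_smul_comm, ← mul_assoc, ← mul_assoc, hTW, hBQ]
    have : Q - 1 = P - U := by rw [hU]; abel
    rw [this, sub_mul, Ring.mul_inverse_cancel _ uU, neg_one_smul]
    abel
  · refine countable_pow _ _ m hm hcount ?_
    intro z hz
    by_contra hcon
    have hz2 : z ^ m ∈ spectrum ℂ (restr S _ hSR) := by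
      have e : restr S _ hSR = (restr T _ hTR) ^ m := restr_pow T _ hTR m hSR
      rw [e]
      exact spectrum.pow_mem_pow _ m hz
    revert hz2
    set μ := z ^ m with hμ
    clear_value μ
    change ¬ _
    rw [spectrum.notMem_iff, restr_alg_sub]
    have bF : BiC T (algebraMap ℂ (X →L[ℂ] X) μ - S) := by
      rw [Algebra.algebraMap_eq_smul_one]; exact (b1.smul _).sub bS
    rcases lt_or_ge ‖μ‖ ε with hlt | hge
    · have hu := hspec μ hlt hcon
      refine unit_ker (K := 0) (bF.comm bF.inv) (bF.inv.comm bR) (Commute.zero_right _) ?_ _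
      rw [Ring.mul_inverse_cancel _ hu]; simp
    · set x : ℂ := μ / r with hx
      have hx1 : 1 ≤ ‖x‖ := by
        rw [hx, norm_div, Complex.norm_real, Real.norm_of_nonneg hr0.le, one_le_div hr0]
        linarith
      set c := x ^ n with hcdef
      have hc1 : 1 ≤ ‖c‖ := by rw [hcdef, norm_pow]; exact one_le_pow₀ hx1
      have hc0 : c ≠ 0 := by rintro h0; rw [h0] at hc1; simp at hc1; linarith
      have bx : BiC T (x • (1 : X →L[ℂ] X)) := b1.smul x
      set G : X →L[ℂ] X := ∑ i ∈ Finset.range n, (x • (1 : X →L[ℂ] X)) ^ i * B ^ (n - 1 - i)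
        with hG
      have bG : BiC T G := BiC.sum fun i _ => (bx.pow i).mul (bB.pow _)
      have hGe : (x • (1 : X →L[ℂ] X) - B) * G = c • 1 - B ^ n := by
        rw [hG, (bx.comm bB).mul_geom_sum₂, smul_pow, one_pow]
      have hFe : algebraMap ℂ (X →L[ℂ] X) μ - S = (r : ℂ) • (x • (1 : X →L[ℂ] X) - B) := by
        rw [smul_sub, smul_smul, hB, smul_smul, mul_inv_cancel₀ hrC, one_smul, hx,
          mul_div_cancel₀ _ hrC, Algebra.algebraMap_eq_smul_one]
      set d : ℂ := 1 - c⁻¹ with hd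
      have hdn : ‖d‖ ≤ 2 := by
        have := norm_sub_le (1 : ℂ) c⁻¹
        have h2 : ‖c⁻¹‖ ≤ 1 := by rw [norm_inv]; exact inv_le_one_of_one_le₀ hc1
        rw [norm_one] at this
        linarith
      set U := 1 - (-d) • (Q - P) with hU
      have uU : IsUnit U := by
        apply isUnit_one_sub_of_norm_lt_one
        rw [norm_smul, norm_neg]
        nlinarith [norm_nonneg (Q - P), norm_nonneg d]
      have bU : BiC T U := b1.sub ((bQ.sub bP).smul _)
      have bV : BiC T (((r : ℂ)⁻¹ * c⁻¹) • (G * Q * Ring.inverse U)) :=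
        ((bG.mul bQ).mul bU.inv).smul _
      refine unit_ker (K := d • Ring.inverse U) (bF.comm bV) (bV.comm bR)
        (bR.comm (bU.inv.smul d)) ?_ _
      have e1 : c⁻¹ • ((c • 1 - B ^ n) * Q) = U - d • (1 - P) := by
        rw [sub_mul, hBQ, smul_mul_assoc, one_mul, smul_sub, smul_smul, inv_mul_cancel₀ hc0, hU, hd]
        module
      have e2 : (algebraMap ℂ (X →L[ℂ] X) μ - S) * (((r : ℂ)⁻¹ * c⁻¹) • (G * Q * Ring.inverse U))
          = (c⁻¹ • ((c • 1 - B ^ n) * Q)) * Ring.inverse U := by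
        rw [hFe, smul_mul_smul_comm, ← mul_assoc, ← mul_assoc, ← mul_assoc, hGe,
          mul_inv_cancel₀ hrC, one_mul, smul_mul_assoc]
      rw [e2, e1, sub_mul, Ring.mul_inverse_cancel _ uU, smul_mul_assoc, mul_smul_comm]

/-- `T` is almost invertible iff `T^m` is almost invertible, for `m ≥ 1`. -/
theorem almostInv_pow_iff (T : X →L[ℂ] X) (m : ℕ) (hm : 1 ≤ m) :
    AlmostInv T ↔ AlmostInv (T ^ m) := by
  refine ⟨?_, almostInv_of_pow T m hm⟩
  rintro ⟨M, N, hM, hN, cM, cN, hc, hu, hcount⟩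
  have : CompleteSpace N := cN.completeSpace_coe
  refine ⟨M, N, restr_pow_mem T M hM m, restr_pow_mem T N hN m, cM, cN, hc, ?_, ?_⟩
  · rw [restr_pow T M hM]
    exact hu.pow m
  · rw [restr_pow T N hN, spectrum.map_pow_of_pos _ (by omega)]
    exact hcount.image _
end
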